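/- Let C be a category with finite products in which product projections are stable under pushout (for every product projection p : X → A and every morphism f : X → Y, a pushout of p along f exists and the pushout leg with domain Y is a product projection). Then C is co-Boolean if and only if every object of C is projection-coextensive. -/

import Mathlib

open CategoryTheory CategoryTheory.Limits

universe v u

variable {C : Type u} [Category.{v} C]

/-- `(p, q)` is a binary product diagram, exhibiting `X` as the product of `A` and `B`. -/
def IsBinaryProduct {X A B : C} (p : X ⟶ A) (q : X ⟶ B) : Prop :=
  Nonempty (IsLimit (BinaryFan.mk p q))

/-- `p : X ⟶ A` is a product projection. -/
def IsProductProjection {X A : C} (p : X ⟶ A) : Prop :=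
  ∃ (B : C) (q : X ⟶ B), IsBinaryProduct p q

/-- A pushout square whose two legs belong to the class `M`. -/
def IsMPushout (M : MorphismProperty C) {Z A B P : C}
    (f : Z ⟶ A) (g : Z ⟶ B) (a : A ⟶ P) (b : B ⟶ P) : Prop :=
  IsPushout f g a b ∧ M a ∧ M b

/-- `X` is an `M`-coextensive object. -/
structure MCoextensive (M : MorphismProperty C) (X : C) : Prop where
  pushout_exists : ∀ ⦃Y A : C⦄ (m : X ⟶ Y) (p : X ⟶ A), M m → IsProductProjection p →
    ∃ (P : C) (a : A ⟶ P) (b : Y ⟶ P), IsMPushout M p m a b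
  isBinaryProduct_iff : ∀ ⦃A₁ A₂ Y B₁ B₂ : C⦄ (π₁ : X ⟶ A₁) (π₂ : X ⟶ A₂)
    (f : X ⟶ Y) (p₁ : A₁ ⟶ B₁) (p₂ : A₂ ⟶ B₂) (π₁' : Y ⟶ B₁) (π₂' : Y ⟶ B₂),
    IsBinaryProduct π₁ π₂ → M f → M p₁ → M p₂ →
    π₁ ≫ p₁ = f ≫ π₁' → π₂ ≫ p₂ = f ≫ π₂' →
    (IsBinaryProduct π₁' π₂' ↔ (IsMPushout M π₁ f p₁ π₁' ∧ IsMPushout M π₂ f p₂ π₂'))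

/-- The class of product projections. -/
def projections (C : Type u) [Category.{v} C] : MorphismProperty C :=
  fun _ _ f => IsProductProjection f

/-- `X` is projection-coextensive. -/
def ProjectionCoextensive (X : C) : Prop := MCoextensive (projections C) X

/-- `f` is a regular epimorphism (a coequalizer of some parallel pair). -/
def IsRegularEpimorphism {X Y : C} (f : X ⟶ Y) : Prop :=
  ∃ (W : C) (a b : W ⟶ X) (h : a ≫ f = b ≫ f), Nonempty (IsColimit (Cofork.ofπ f h))

/-- The class of regular epimorphisms. -/
def regularEpis (C : Type u) [Category.{v} C] : MorphismProperty C :=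
  fun _ _ f => IsRegularEpimorphism f

/-- `X` is regularly-coextensive. -/
def RegularlyCoextensive (X : C) : Prop := MCoextensive (regularEpis C) X

/-- A regular category: finitely complete, coequalizers of kernel pairs, and
regular epimorphisms are stable under pullback. -/
class IsRegularCategory (C : Type u) [Category.{v} C] [HasFiniteLimits C] : Prop where
  hasCoequalizer_kernelPair : ∀ {X Y : C} (f : X ⟶ Y),
    HasCoequalizer (pullback.fst f f) (pullback.snd f f)
  regularEpi_stable : ∀ {X Y Z : C} (f : X ⟶ Y) (g : Z ⟶ Y),
    IsRegularEpimorphism f → IsRegularEpimorphism (pullback.snd f g)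

/-- `X` has global support: the unique morphism to the terminal object is a regular epi. -/
def HasGlobalSupport [HasTerminal C] (X : C) : Prop :=
  IsRegularEpimorphism (terminal.from X)

/-- A co-Boolean category: pushouts of product projections along arbitrary morphisms
exist and are product projections, product projections push out binary product
diagrams to binary product diagrams, and the only objects whose diagonal pair of
identities is a binary product diagram are the terminal ones. -/
structure CoBoolean (C : Type u) [Category.{v} C] [HasFiniteProducts C] : Prop where
  pushout_exists : ∀ ⦃X A Y : C⦄ (p : X ⟶ A) (f : X ⟶ Y), IsProductProjection p →
    ∃ (P : C) (a : A ⟶ P) (q : Y ⟶ P), IsPushout p f a q ∧ IsProductProjection q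
  pushout_prod : ∀ ⦃X A₁ A₂ Y B₁ B₂ : C⦄ (π₁ : X ⟶ A₁) (π₂ : X ⟶ A₂) (f : X ⟶ Y)
    (p₁ : A₁ ⟶ B₁) (p₂ : A₂ ⟶ B₂) (π₁' : Y ⟶ B₁) (π₂' : Y ⟶ B₂),
    IsBinaryProduct π₁ π₂ → IsProductProjection f →
    IsPushout π₁ f p₁ π₁' → IsPushout π₂ f p₂ π₂' → IsBinaryProduct π₁' π₂'
  terminal_of_diag : ∀ (X : C), IsBinaryProduct (𝟙 X) (𝟙 X) → Nonempty (IsTerminal X)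

theorem IsBinaryProduct.lift_exists {X A B T : C} {p : X ⟶ A} {q : X ⟶ B}
    (h : IsBinaryProduct p q) (a : T ⟶ A) (b : T ⟶ B) :
    ∃ l : T ⟶ X, l ≫ p = a ∧ l ≫ q = b := by
  obtain ⟨h⟩ := h
  obtain ⟨l, h1, h2⟩ := BinaryFan.IsLimit.lift' h a b
  exact ⟨l, h1, h2⟩

theorem IsBinaryProduct.eq_of {X A B T : C} {p : X ⟶ A} {q : X ⟶ B}
    (h : IsBinaryProduct p q) {l m : T ⟶ X} (h1 : l ≫ p = m ≫ p) (h2 : l ≫ q = m ≫ q) :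
    l = m := by
  obtain ⟨h⟩ := h
  exact BinaryFan.IsLimit.hom_ext h h1 h2

theorem IsBinaryProduct.of_lift {X A B : C} {p : X ⟶ A} {q : X ⟶ B}
    (h1 : ∀ (T : C) (a : T ⟶ A) (b : T ⟶ B), ∃ l : T ⟶ X, l ≫ p = a ∧ l ≫ q = b)
    (h2 : ∀ (T : C) (l m : T ⟶ X), l ≫ p = m ≫ p → l ≫ q = m ≫ q → l = m) :
    IsBinaryProduct p q := by
  choose L hL1 hL2 using h1
  exact ⟨BinaryFan.isLimitMk (fun s => L _ s.fst s.snd) (fun s => hL1 _ _ _)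
    (fun s => hL2 _ _ _)
    (fun s m e1 e2 => h2 _ _ _ (e1.trans (hL1 _ _ _).symm) (e2.trans (hL2 _ _ _).symm))⟩

theorem IsBinaryProduct.symm {X A B : C} {p : X ⟶ A} {q : X ⟶ B}
    (h : IsBinaryProduct p q) : IsBinaryProduct q p :=
  .of_lift (fun _ a b => (h.lift_exists b a).imp fun _ e => ⟨e.2, e.1⟩)
    (fun _ _ _ e1 e2 => h.eq_of e2 e1)

theorem IsBinaryProduct.id_of_terminal {X T : C} (hT : IsTerminal T) (t : X ⟶ T) :
    IsBinaryProduct (𝟙 X) t :=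
  .of_lift (fun _ a b => ⟨a, Category.comp_id a, hT.hom_ext _ _⟩)
    (fun _ l m e1 _ => by simpa using e1)

theorem IsBinaryProduct.isIso_of_terminal {X A T : C} {p : X ⟶ A} {t : X ⟶ T}
    (h : IsBinaryProduct p t) (hT : IsTerminal T) : IsIso p := by
  obtain ⟨l, e, -⟩ := h.lift_exists (𝟙 A) (hT.from A)
  exact ⟨l, h.eq_of (by simp [e]) (hT.hom_ext _ _), e⟩

theorem IsProductProjection.comp_isIso {X A B : C} {p : X ⟶ A} (h : IsProductProjection p)
    (i : A ⟶ B) [IsIso i] : IsProductProjection (p ≫ i) := by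
  obtain ⟨D, q, h⟩ := h
  refine ⟨D, q, .of_lift (fun _ a b => ?_) (fun _ l m e1 e2 => h.eq_of ?_ e2)⟩
  · obtain ⟨l, e1, e2⟩ := h.lift_exists (a ≫ inv i) b
    exact ⟨l, by rw [← Category.assoc, e1]; simp, e2⟩
  · rw [← cancel_mono i]
    simpa using e1

theorem isProductProjection_of_isPushout
    (hstable : ∀ ⦃X A Y : C⦄ (p : X ⟶ A) (f : X ⟶ Y), IsProductProjection p →
      ∃ (P : C) (a : A ⟶ P) (q : Y ⟶ P), IsPushout p f a q ∧ IsProductProjection q)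
    {X A Y P : C} {p : X ⟶ A} {f : X ⟶ Y} {a : A ⟶ P} {q : Y ⟶ P}
    (hp : IsProductProjection p) (h : IsPushout p f a q) : IsProductProjection q := by
  obtain ⟨P', a', q', h', hq'⟩ := hstable p f hp
  have := hq'.comp_isIso (h'.isoIsPushout _ _ h).hom
  simpa using this

theorem CoBoolean.terminal_of_id [HasFiniteProducts C] (H : CoBoolean C) {A Q : C} {c : A ⟶ Q}
    (h : IsBinaryProduct (𝟙 A) c) : Nonempty (IsTerminal Q) := by
  obtain ⟨S, s, s', hS, -⟩ := H.pushout_exists c c ⟨_, _, h.symm⟩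
  have h2 := H.pushout_prod (𝟙 A) c c c s (𝟙 Q) s' h ⟨_, _, h.symm⟩
    (IsPushout.of_horiz_isIso ⟨by simp⟩) hS
  have hd : s' ≫ hS.desc (𝟙 Q) (𝟙 Q) rfl = 𝟙 Q := by simp
  have key : ∀ (T : C) (a b : T ⟶ Q), a = b := by
    intro T a b
    obtain ⟨l, e1, e2⟩ := h2.lift_exists a (b ≫ s')
    rw [Category.comp_id] at e1
    subst e1
    have := congrArg (· ≫ hS.desc (𝟙 Q) (𝟙 Q) rfl) e2
    simpa [hd] using this
  exact H.terminal_of_diag Q (.of_lift (fun T a b => ⟨a, key _ _ _, key _ _ _⟩)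
    (fun T l m _ _ => key _ _ _))

theorem CoBoolean.terminal_and_epi [HasFiniteProducts C] (H : CoBoolean C) {X A B Q : C}
    {p : X ⟶ A} {q : X ⟶ B} (h : IsBinaryProduct p q) {a' : B ⟶ Q} {c : A ⟶ Q}
    (hQ : IsPushout q p a' c) : Nonempty (IsTerminal Q) ∧ Epi p := by
  obtain ⟨P, a, b, hP, -⟩ := H.pushout_exists p p ⟨_, _, h⟩
  have h2 := H.pushout_prod p q p a a' b c h ⟨_, _, h⟩ hP hQ
  have hda : a ≫ hP.desc (𝟙 A) (𝟙 A) rfl = 𝟙 A := by simp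
  have hdb : b ≫ hP.desc (𝟙 A) (𝟙 A) rfl = 𝟙 A := by simp
  have h3 : IsBinaryProduct (𝟙 A) c := by
    refine .of_lift (fun T x y => ?_) (fun T l m e1 _ => by simpa using e1)
    obtain ⟨l, e1, e2⟩ := h2.lift_exists (x ≫ b) y
    have := congrArg (· ≫ hP.desc (𝟙 A) (𝟙 A) rfl) e1
    exact ⟨l, by simpa [hdb] using this, e2⟩
  have ht := H.terminal_of_id h3
  refine ⟨ht, ?_⟩
  obtain ⟨ht⟩ := ht
  have := h2.isIso_of_terminal ht
  have hd : hP.desc (𝟙 A) (𝟙 A) rfl = inv b := by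
    rw [← cancel_epi b, hdb, IsIso.hom_inv_id]
  have hab : a = b := by
    rw [hd] at hda
    simpa using congrArg (· ≫ b) hda
  refine ⟨fun g k e => ?_⟩
  have e1 := hP.inl_desc g k e
  have e2 := hP.inr_desc g k e
  exact e1.symm.trans ((congrArg (· ≫ hP.desc g k e) hab).trans e2)

theorem CoBoolean.epi [HasFiniteProducts C] (H : CoBoolean C) {X A : C}
    {p : X ⟶ A} (h : IsProductProjection p) : Epi p := by
  obtain ⟨B, q, h⟩ := h
  obtain ⟨Q, a', c, hQ, -⟩ := H.pushout_exists q p ⟨_, _, h.symm⟩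
  exact (H.terminal_and_epi h hQ).2

theorem CoBoolean.isIso_comparison [HasFiniteProducts C] (H : CoBoolean C) {Y P₁ P₂ B₁ B₂ : C}
    {k₁ : Y ⟶ P₁} {k₂ : Y ⟶ P₂} {c₁ : P₁ ⟶ B₁} {c₂ : P₂ ⟶ B₂}
    (h : IsBinaryProduct k₁ k₂) (h' : IsBinaryProduct (k₁ ≫ c₁) (k₂ ≫ c₂)) : IsIso c₁ := by
  have := H.epi ⟨_, _, h⟩
  have hpo : IsPushout (k₁ ≫ c₁) k₁ (𝟙 B₁) c₁ := by
    refine ⟨⟨by simp⟩, ⟨PushoutCocone.IsColimit.mk _ (fun s => s.inl) (fun s => by simp)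
      (fun s => ?_) (fun s m e1 e2 => by simpa using e1)⟩⟩
    rw [← cancel_epi k₁]
    simpa using s.condition
  obtain ⟨R, s, r, hR, -⟩ := H.pushout_exists (k₂ ≫ c₂) k₁ ⟨_, _, h'.symm⟩
  have h2 := H.pushout_prod _ _ k₁ _ _ _ _ h' ⟨_, _, h⟩ hpo hR
  have hr : Epi r := H.epi ⟨_, _, h2.symm⟩
  obtain ⟨Q, a, c, hQ, -⟩ := H.pushout_exists k₂ k₁ ⟨_, _, h.symm⟩
  obtain ⟨⟨ht⟩, -⟩ := H.terminal_and_epi h hQ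
  have e : k₂ ≫ (c₂ ≫ s) = k₁ ≫ r := by simpa using hR.w
  have hd : c ≫ hQ.desc (c₂ ≫ s) r e = r := by simp
  have hde : Epi (hQ.desc (c₂ ≫ s) r e) := by
    rw [← hd] at hr
    exact epi_of_epi c _
  have i1 : ht.from R ≫ hQ.desc (c₂ ≫ s) r e = 𝟙 R := by
    rw [← cancel_epi (hQ.desc (c₂ ≫ s) r e), ← Category.assoc,
      ht.hom_ext (hQ.desc (c₂ ≫ s) r e ≫ ht.from R) (𝟙 Q)]
    simp
  exact h2.isIso_of_terminal
    (ht.ofIso ⟨hQ.desc (c₂ ≫ s) r e, ht.from R, ht.hom_ext _ _, i1⟩)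

/-- If product projections are stable under pushout, then `C` is co-Boolean if and
only if every object of `C` is projection-coextensive. -/
theorem coBoolean_iff_forall_projectionCoextensive
    {C : Type u} [Category.{v} C] [HasFiniteProducts C]
    (hstable : ∀ ⦃X A Y : C⦄ (p : X ⟶ A) (f : X ⟶ Y), IsProductProjection p →
      ∃ (P : C) (a : A ⟶ P) (q : Y ⟶ P), IsPushout p f a q ∧ IsProductProjection q) :
    CoBoolean C ↔ ∀ X : C, ProjectionCoextensive X := by
  have hst := @isProductProjection_of_isPushout C _ hstable
  constructor
  · intro H X
    refine ⟨?_, ?_⟩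
    · intro Y A m p hm hp
      obtain ⟨P, a, b, h, hb⟩ := hstable p m hp
      exact ⟨P, a, b, h, hst hm h.flip, hb⟩
    · intro A₁ A₂ Y B₁ B₂ π₁ π₂ f p₁ p₂ π₁' π₂' hπ hf hp₁ hp₂ w₁ w₂
      constructor
      · intro h'
        obtain ⟨P₁, a₁, k₁, h₁, -⟩ := hstable π₁ f ⟨_, _, hπ⟩
        obtain ⟨P₂, a₂, k₂, h₂, -⟩ := hstable π₂ f ⟨_, _, hπ.symm⟩
        have hk := H.pushout_prod _ _ _ _ _ _ _ hπ hf h₁ h₂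
        have e₁ : k₁ ≫ h₁.desc p₁ π₁' w₁ = π₁' := by simp
        have e₂ : k₂ ≫ h₂.desc p₂ π₂' w₂ = π₂' := by simp
        have h'' : IsBinaryProduct (k₁ ≫ h₁.desc p₁ π₁' w₁) (k₂ ≫ h₂.desc p₂ π₂' w₂) := by
          rwa [e₁, e₂]
        have i₁ := H.isIso_comparison hk h''
        have i₂ := H.isIso_comparison hk.symm h''.symm
        refine ⟨⟨?_, hp₁, ⟨_, _, h'⟩⟩, ⟨?_, hp₂, ⟨_, _, h'.symm⟩⟩⟩
        · exact h₁.of_iso (Iso.refl _) (Iso.refl _) (Iso.refl _) (asIso (h₁.desc p₁ π₁' w₁))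
            (by simp) (by simp) (by simp) (by simp)
        · exact h₂.of_iso (Iso.refl _) (Iso.refl _) (Iso.refl _) (asIso (h₂.desc p₂ π₂' w₂))
            (by simp) (by simp) (by simp) (by simp)
      · rintro ⟨h₁, h₂⟩
        exact H.pushout_prod _ _ _ _ _ _ _ hπ hf h₁.1 h₂.1
  · intro H
    refine ⟨hstable, ?_, ?_⟩
    · intro X A₁ A₂ Y B₁ B₂ π₁ π₂ f p₁ p₂ π₁' π₂' hπ hf h₁ h₂
      have q₁ := hst hf h₁.flip
      have q₂ := hst hf h₂.flip
      exact ((H X).isBinaryProduct_iff _ _ _ _ _ _ _ hπ hf q₁ q₂ h₁.w h₂.w).2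
        ⟨⟨h₁, q₁, hst ⟨_, _, hπ⟩ h₁⟩, ⟨h₂, q₂, hst ⟨_, _, hπ.symm⟩ h₂⟩⟩
    · intro X hX
      have hid := IsBinaryProduct.id_of_terminal terminalIsTerminal (terminal.from X)
      have := ((H X).isBinaryProduct_iff (𝟙 X) (𝟙 X) (𝟙 X) (𝟙 X) (terminal.from X) (𝟙 X)
        (terminal.from X) hX ⟨_, _, hid⟩ ⟨_, _, hid⟩ ⟨_, _, hid.symm⟩ rfl rfl).1 hid
      have hpo := this.2.1
      have : IsIso (terminal.from X) := by
        refine ⟨hpo.desc (𝟙 X) (𝟙 X) rfl, hpo.inl_desc _ _ _, ?_⟩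
        exact terminalIsTerminal.hom_ext _ _
      exact ⟨terminalIsTerminal.ofIso (asIso (terminal.from X)).symm⟩
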